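/- Let Ω ⊂ ℝ² be a bounded open set with diameter h_Ω and let d(x) denote the Euclidean distance from x ∈ Ω to the complement of Ω. Let K_1, …, K_N be a finite partition of Ω into Lebesgue-measurable sets and let ρ_1, …, ρ_N > 0 be constants defining ρ : Ω → ℝ by ρ = ρ_i on K_i, with ∫_Ω ρ dx = 1; write |K_i| for the Lebesgue measure of K_i, d_{K_i} = sup_{x ∈ K_i} d(x), and ρ_max = max_i ρ_i. Let C₀ > 0 and let G : Ω × Ω → ℝ be measurable with 0 ≤ G(x,ξ) ≤ C₀ ln(1 + d(x)d(ξ)/|x−ξ|²) for all x ≠ ξ in Ω. Suppose λ > 0 and u : Ω → ℝ is measurable, u > 0 almost everywhere, 0 < ∫_Ω ρ u² dx < ∞, and u(x) = λ ∫_Ω G(x,ξ) ρ(ξ) u(ξ) dξ for almost every x ∈ Ω. Then there exists a constant C > 0, depending only on C₀, such that λ ≥ C · ( 1 + Σ_{i=1}^N ρ_i |K_i| ( ln(1 + d_{K_i} h_Ω ρ_max) )² )^{−1/2}. -/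

import Mathlib

open MeasureTheory

/-!
With respect to the probability measure `ν = ρ dx` on `Ω`, the function `u` is an eigenfunction of
the integral operator with kernel `G`, so Cauchy–Schwarz gives
`1 ≤ λ² ∬ G(x,ξ)² dν(ξ) dν(x)`. Writing `R = ρ_max`, `h = h_Ω` and `r = |x - ξ|`,
submultiplicativity of `t ↦ 1 + t` splits the logarithmic bound on `G` as
`ln (1 + d(x) h / r²) ≤ ln (1 + d(x) h R) + ln (1 + 1 / (R r²))`. The first term does not depend on
`ξ`; the square of the second has `dν(ξ)`-integral at most `R ∫ ln² (1 + 1 / (R |y|²)) dy`, which in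
the plane is scale invariant, hence equal to the absolute constant `∫ ln² (1 + 1 / |y|²) dy`.
-/

open Module (finrank)
open scoped ENNReal

section HilbertSchmidt

variable {α 𝕜 : Type*} [MeasurableSpace α] [RCLike 𝕜] {ν : Measure α}

lemma sq_lintegral_mul_le_lintegral_sq_mul_lintegral_sq {f g : α → ℝ≥0∞}
    (hf : AEMeasurable f ν) (hg : AEMeasurable g ν) :
    (∫⁻ x, f x * g x ∂ν) ^ 2 ≤ (∫⁻ x, f x ^ 2 ∂ν) * ∫⁻ x, g x ^ 2 ∂ν := by
  have holder := ENNReal.lintegral_mul_le_Lp_mul_Lq ν Real.HolderConjugate.two_two hf hg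
  have sq_sqrt (z : ℝ≥0∞) : (z ^ (1 / (2 : ℝ))) ^ 2 = z := by
    rw [← ENNReal.rpow_natCast, ← ENNReal.rpow_mul]
    norm_num
  simpa [mul_pow, ← one_div, sq_sqrt] using pow_le_pow_left' holder 2

theorem one_le_enorm_sq_mul_lintegral_enorm_sq_of_eigenfunction
    {k : α → α → 𝕜} {u : α → 𝕜} {c : 𝕜}
    (hk : ∀ᵐ x ∂ν, AEMeasurable (k x) ν) (hu : AEMeasurable u ν)
    (hu_ne_zero : ∫⁻ x, ‖u x‖ₑ ^ 2 ∂ν ≠ 0) (hu_ne_top : ∫⁻ x, ‖u x‖ₑ ^ 2 ∂ν ≠ ⊤)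
    (heig : ∀ᵐ x ∂ν, u x = c * ∫ ξ, k x ξ * u ξ ∂ν) :
    1 ≤ ‖c‖ₑ ^ 2 * ∫⁻ x, ∫⁻ ξ, ‖k x ξ‖ₑ ^ 2 ∂ν ∂ν := by
  set A := ∫⁻ x, ‖u x‖ₑ ^ 2 ∂ν
  have pointwise : ∀ᵐ x ∂ν, ‖u x‖ₑ ^ 2 ≤ ‖c‖ₑ ^ 2 * (∫⁻ ξ, ‖k x ξ‖ₑ ^ 2 ∂ν) * A := by
    filter_upwards [hk, heig] with x hkx hx
    calc ‖u x‖ₑ ^ 2 = ‖c‖ₑ ^ 2 * ‖∫ ξ, k x ξ * u ξ ∂ν‖ₑ ^ 2 := by rw [hx, enorm_mul, mul_pow]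
      _ ≤ ‖c‖ₑ ^ 2 * (∫⁻ ξ, ‖k x ξ‖ₑ * ‖u ξ‖ₑ ∂ν) ^ 2 := by
        gcongr
        simpa only [enorm_mul] using enorm_integral_le_lintegral_enorm (fun ξ => k x ξ * u ξ)
      _ ≤ ‖c‖ₑ ^ 2 * ((∫⁻ ξ, ‖k x ξ‖ₑ ^ 2 ∂ν) * A) := by
        gcongr
        exact sq_lintegral_mul_le_lintegral_sq_mul_lintegral_sq hkx.enorm hu.enorm
      _ = ‖c‖ₑ ^ 2 * (∫⁻ ξ, ‖k x ξ‖ₑ ^ 2 ∂ν) * A := by rw [mul_assoc]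
  have integrated : 1 * A ≤ (‖c‖ₑ ^ 2 * ∫⁻ x, ∫⁻ ξ, ‖k x ξ‖ₑ ^ 2 ∂ν ∂ν) * A := by
    rw [one_mul, ← lintegral_const_mul' (‖c‖ₑ ^ 2) _ (by finiteness),
      ← lintegral_mul_const' A _ hu_ne_top]
    exact lintegral_mono_ae pointwise
  exact (ENNReal.mul_le_mul_iff_left hu_ne_zero hu_ne_top).mp integrated

end HilbertSchmidt

section LogBounds

lemma log_one_add_mul_le {a b : ℝ} (ha : 0 ≤ a) (hb : 0 ≤ b) :
    Real.log (1 + a * b) ≤ Real.log (1 + a) + Real.log (1 + b) := by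
  rw [← Real.log_mul (by positivity) (by positivity)]
  exact Real.log_le_log (by positivity) (by linarith)

lemma sq_log_one_add_div_sq_le {a R : ℝ} (ha : 0 ≤ a) (hR : 0 < R) (r : ℝ) :
    Real.log (1 + a / r ^ 2) ^ 2 ≤
      2 * (Real.log (1 + a * R) ^ 2 + Real.log (1 + 1 / (R * r ^ 2)) ^ 2) := by
  have factor : a / r ^ 2 = a * R * (1 / (R * r ^ 2)) := by field_simp
  have log_nonneg : 0 ≤ Real.log (1 + a / r ^ 2) :=
    Real.log_nonneg (le_add_of_nonneg_right (by positivity))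
  calc Real.log (1 + a / r ^ 2) ^ 2
      ≤ (Real.log (1 + a * R) + Real.log (1 + 1 / (R * r ^ 2))) ^ 2 := by
        gcongr
        rw [factor]
        exact log_one_add_mul_le (by positivity) (by positivity)
    _ ≤ _ := add_sq_le

lemma log_one_add_pow_le {n : ℕ} (hn : n ≠ 0) {q : ℝ} (hq : 0 ≤ q) :
    Real.log (1 + q ^ n) ≤ n * q := by
  calc Real.log (1 + q ^ n) ≤ Real.log ((1 + q) ^ n) := by
        refine Real.log_le_log (by positivity) ?_
        simpa using pow_add_pow_le zero_le_one hq hn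
    _ = n * Real.log (1 + q) := Real.log_pow _ _
    _ ≤ n * q := by
        gcongr
        linarith [Real.log_le_sub_one_of_pos (show 0 < 1 + q by positivity)]

lemma mul_sq_log_one_add_one_div_sq_le {r : ℝ} (hr : 0 < r) :
    r * Real.log (1 + 1 / r ^ 2) ^ 2 ≤ 16 := by
  have log_nonneg : 0 ≤ Real.log (1 + 1 / r ^ 2) :=
    Real.log_nonneg (le_add_of_nonneg_right (by positivity))
  have sqrt_sq : √(1 / r) ^ 2 = 1 / r := Real.sq_sqrt (by positivity)
  have log_le : Real.log (1 + 1 / r ^ 2) ≤ 4 * √(1 / r) := by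
    convert log_one_add_pow_le four_ne_zero (Real.sqrt_nonneg (1 / r)) using 3
    · rw [show 4 = 2 * 2 from rfl, pow_mul, sqrt_sq, div_pow, one_pow]
    · norm_num
  calc r * Real.log (1 + 1 / r ^ 2) ^ 2 ≤ r * (4 * √(1 / r)) ^ 2 := by gcongr
    _ = 16 := by
      rw [mul_pow, sqrt_sq]
      field_simp
      norm_num

lemma mul_sq_log_one_add_one_div_sq_le_rpow {r : ℝ} (hr : 0 < r) :
    r * Real.log (1 + 1 / r ^ 2) ^ 2 ≤ r ^ (-3 : ℝ) := by
  have log_nonneg : 0 ≤ Real.log (1 + 1 / r ^ 2) :=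
    Real.log_nonneg (le_add_of_nonneg_right (by positivity))
  have log_le : Real.log (1 + 1 / r ^ 2) ≤ 1 / r ^ 2 := by
    simpa using log_one_add_pow_le one_ne_zero (show 0 ≤ 1 / r ^ 2 by positivity)
  calc r * Real.log (1 + 1 / r ^ 2) ^ 2 ≤ r * (1 / r ^ 2) ^ 2 := by gcongr
    _ = r ^ (-3 : ℝ) := by
      rw [Real.rpow_neg hr.le]
      norm_cast
      field_simp

lemma integrableOn_mul_sq_log_one_add_one_div_sq :
    IntegrableOn (fun r : ℝ => r * Real.log (1 + 1 / r ^ 2) ^ 2) (Set.Ioi 0) := by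
  have measurable : Measurable fun r : ℝ => r * Real.log (1 + 1 / r ^ 2) ^ 2 := by fun_prop
  rw [← Set.Ioc_union_Ioi_eq_Ioi zero_le_one]
  refine IntegrableOn.union ?_ ?_
  · refine Measure.integrableOn_of_bounded (M := 16) (by simp) measurable.aestronglyMeasurable ?_
    filter_upwards [ae_restrict_mem measurableSet_Ioc] with r hr
    have hr_pos : 0 < r := hr.1
    rw [Real.norm_of_nonneg (by positivity)]
    exact mul_sq_log_one_add_one_div_sq_le hr_pos
  · refine (integrableOn_Ioi_rpow_of_lt (a := -3) (by norm_num) one_pos).mono'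
      measurable.aestronglyMeasurable ?_
    filter_upwards [ae_restrict_mem measurableSet_Ioi] with r hr
    have hr_pos : 0 < r := one_pos.trans hr
    rw [Real.norm_of_nonneg (by positivity)]
    exact mul_sq_log_one_add_one_div_sq_le_rpow hr_pos

end LogBounds

section LogEnergy

variable {E : Type*} [NormedAddCommGroup E] [MeasurableSpace E]

/-- The integral of `ln² (1 + 1 / ‖y‖²)` over the plane, the only quantity besides `C₀` that enters
the constant of the eigenvalue bound. -/
noncomputable def logEnergy (μ : Measure E) : ℝ :=
  ∫ y, Real.log (1 + 1 / ‖y‖ ^ 2) ^ 2 ∂μ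

lemma logEnergy_nonneg (μ : Measure E) : 0 ≤ logEnergy μ :=
  integral_nonneg fun _ => sq_nonneg _

variable [NormedSpace ℝ E] [BorelSpace E] {μ : Measure E} [μ.IsAddHaarMeasure]

lemma integrable_sq_log_one_add_one_div_norm_sq (hE : finrank ℝ E = 2) :
    Integrable (fun y : E => Real.log (1 + 1 / ‖y‖ ^ 2) ^ 2) μ := by
  have : FiniteDimensional ℝ E := .of_finrank_pos (by lia)
  have : Nontrivial E := Module.nontrivial_of_finrank_pos (R := ℝ) (by lia)
  rw [integrable_fun_norm_addHaar μ (f := fun r => Real.log (1 + 1 / r ^ 2) ^ 2), hE]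
  simpa using integrableOn_mul_sq_log_one_add_one_div_sq

lemma ofReal_mul_lintegral_sq_log_one_add_one_div_eq_logEnergy (hE : finrank ℝ E = 2) {R : ℝ}
    (hR : 0 < R) (x : E) :
    ENNReal.ofReal R *
        ∫⁻ ξ, ENNReal.ofReal (Real.log (1 + 1 / (R * dist x ξ ^ 2)) ^ 2) ∂μ =
      ENNReal.ofReal (logEnergy μ) := by
  have : FiniteDimensional ℝ E := .of_finrank_pos (by lia)
  let f : E → ℝ := fun y => Real.log (1 + 1 / ‖y‖ ^ 2) ^ 2
  have rescale (ξ : E) : Real.log (1 + 1 / (R * dist x ξ ^ 2)) ^ 2 = f (√R • (ξ - x)) := by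
    simp only [f]
    rw [norm_smul, mul_pow, Real.norm_of_nonneg R.sqrt_nonneg, Real.sq_sqrt hR.le,
      dist_comm, dist_eq_norm]
  have integrable : Integrable (fun y => f (√R • y)) μ :=
    (integrable_sq_log_one_add_one_div_norm_sq hE).comp_smul (Real.sqrt_ne_zero'.mpr hR)
  simp only [rescale]
  rw [lintegral_sub_right_eq_self (fun y => ENNReal.ofReal (f (√R • y))) x,
    ← ofReal_integral_eq_lintegral_ofReal integrable (.of_forall fun _ => sq_nonneg _),
    Measure.integral_comp_smul_of_nonneg μ f (√R) (hR := R.sqrt_nonneg), hE,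
    Real.sq_sqrt hR.le, ← ENNReal.ofReal_mul hR.le, smul_eq_mul, mul_inv_cancel_left₀ hR.ne']
  rfl

lemma lintegral_sq_log_one_add_div_dist_sq_le (hE : finrank ℝ E = 2) {ν : Measure E}
    [IsProbabilityMeasure ν] {a R : ℝ} (ha : 0 ≤ a) (hR : 0 < R)
    (hν : ν ≤ ENNReal.ofReal R • μ) (x : E) :
    ∫⁻ ξ, ENNReal.ofReal (Real.log (1 + a / dist x ξ ^ 2) ^ 2) ∂ν ≤
      ENNReal.ofReal (2 * (Real.log (1 + a * R) ^ 2 + logEnergy μ)) := by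
  calc ∫⁻ ξ, ENNReal.ofReal (Real.log (1 + a / dist x ξ ^ 2) ^ 2) ∂ν
      ≤ ∫⁻ ξ, 2 * (ENNReal.ofReal (Real.log (1 + a * R) ^ 2) +
          ENNReal.ofReal (Real.log (1 + 1 / (R * dist x ξ ^ 2)) ^ 2)) ∂ν := by
        gcongr with ξ
        rw [← ENNReal.ofReal_add (by positivity) (by positivity), ← ENNReal.ofReal_ofNat 2,
          ← ENNReal.ofReal_mul (by positivity)]
        exact ENNReal.ofReal_le_ofReal (sq_log_one_add_div_sq_le ha hR _)
    _ = 2 * (ENNReal.ofReal (Real.log (1 + a * R) ^ 2) +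
          ∫⁻ ξ, ENNReal.ofReal (Real.log (1 + 1 / (R * dist x ξ ^ 2)) ^ 2) ∂ν) := by
        rw [lintegral_const_mul' _ _ (by finiteness), lintegral_add_left measurable_const,
          lintegral_const, measure_univ, mul_one]
    _ ≤ 2 * (ENNReal.ofReal (Real.log (1 + a * R) ^ 2) + ENNReal.ofReal (logEnergy μ)) := by
        gcongr
        rw [← ofReal_mul_lintegral_sq_log_one_add_one_div_eq_logEnergy hE hR x,
          ← smul_eq_mul, ← lintegral_smul_measure]
        exact lintegral_mono' hν le_rfl
    _ = _ := by
        rw [← ENNReal.ofReal_add (by positivity) (logEnergy_nonneg μ), ← ENNReal.ofReal_ofNat 2,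
          ← ENNReal.ofReal_mul (by positivity)]

end LogEnergy

section LogKernel

variable {E : Type*} [NormedAddCommGroup E] [NormedSpace ℝ E]

lemma infDist_compl_le_diam [Nontrivial E] {Ω : Set E} (hΩ : Bornology.IsBounded Ω) (x : E) :
    Metric.infDist x Ωᶜ ≤ Metric.diam Ω := by
  have ball_le := Metric.diam_mono (Metric.ball_infDist_compl_subset (x := x)) hΩ
  rw [Metric.diam_ball_eq x Metric.infDist_nonneg] at ball_le
  linarith [Metric.infDist_nonneg (x := x) (s := Ωᶜ)]

lemma infDist_compl_le_iSup [Nontrivial E] {Ω : Set E} (hΩ : Bornology.IsBounded Ω) {S : Set E}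
    {x : E} (hx : x ∈ S) : Metric.infDist x Ωᶜ ≤ ⨆ y : S, Metric.infDist (y : E) Ωᶜ := by
  refine le_ciSup (f := fun y : S => Metric.infDist (y : E) Ωᶜ) ⟨Metric.diam Ω, ?_⟩ ⟨x, hx⟩
  rintro _ ⟨y, rfl⟩
  exact infDist_compl_le_diam hΩ y

variable [MeasurableSpace E] [BorelSpace E] {μ ν : Measure E} [μ.IsAddHaarMeasure]
  [IsProbabilityMeasure ν] {Ω : Set E} {C₀ R : ℝ}

lemma lintegral_enorm_sq_le_of_abs_le_log (hE : finrank ℝ E = 2) (hΩ : Bornology.IsBounded Ω)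
    (hR : 0 < R) (hν : ν ≤ ENNReal.ofReal R • μ) (hνΩ : ∀ᵐ ξ ∂ν, ξ ∈ Ω) (hC₀ : 0 ≤ C₀)
    {g : E → ℝ} {x : E}
    (hg : ∀ ξ ∈ Ω, x ≠ ξ → |g ξ| ≤ C₀ * Real.log (1 +
      Metric.infDist x Ωᶜ * Metric.infDist ξ Ωᶜ / dist x ξ ^ 2)) :
    ∫⁻ ξ, ‖g ξ‖ₑ ^ 2 ∂ν ≤ ENNReal.ofReal (C₀ ^ 2 *
      (2 * (Real.log (1 + Metric.infDist x Ωᶜ * Metric.diam Ω * R) ^ 2 + logEnergy μ))) := by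
  have : FiniteDimensional ℝ E := .of_finrank_pos (by lia)
  have : Nontrivial E := Module.nontrivial_of_finrank_pos (R := ℝ) (by lia)
  have infDist_nonneg (y : E) : 0 ≤ Metric.infDist y Ωᶜ := Metric.infDist_nonneg
  have diam_nonneg : 0 ≤ Metric.diam Ω := Metric.diam_nonneg
  have ae_ne : ∀ᵐ ξ ∂ν, ξ ≠ x :=
    (Measure.absolutelyContinuous_of_le_smul hν).ae_le (Measure.ae_ne μ x)
  have pointwise : ∀ᵐ ξ ∂ν, ‖g ξ‖ₑ ^ 2 ≤ ENNReal.ofReal (C₀ ^ 2) * ENNReal.ofReal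
      (Real.log (1 + Metric.infDist x Ωᶜ * Metric.diam Ω / dist x ξ ^ 2) ^ 2) := by
    filter_upwards [ae_ne, hνΩ] with ξ hξ_ne hξ
    rw [← ENNReal.ofReal_mul (by positivity), ← mul_pow, ← ofReal_norm,
      ← ENNReal.ofReal_pow (norm_nonneg _)]
    gcongr
    refine (hg ξ hξ hξ_ne.symm).trans ?_
    have := infDist_nonneg x
    have := infDist_nonneg ξ
    gcongr
    exact infDist_compl_le_diam hΩ ξ
  refine (lintegral_mono_ae pointwise).trans ?_
  rw [lintegral_const_mul' _ _ ENNReal.ofReal_ne_top, ENNReal.ofReal_mul (by positivity)]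
  gcongr
  exact lintegral_sq_log_one_add_div_dist_sq_le hE
    (mul_nonneg (infDist_nonneg x) diam_nonneg) hR hν x

theorem one_le_enorm_sq_mul_lintegral_of_log_kernel (hE : finrank ℝ E = 2)
    (hΩ : Bornology.IsBounded Ω) (hR : 0 < R) (hν : ν ≤ ENNReal.ofReal R • μ)
    (hνΩ : ∀ᵐ x ∂ν, x ∈ Ω) (hC₀ : 0 ≤ C₀) {G : E → E → ℝ} {u : E → ℝ} {lam : ℝ}
    (hG_meas : ∀ x ∈ Ω, AEMeasurable (G x) ν)
    (hG : ∀ x ∈ Ω, ∀ ξ ∈ Ω, x ≠ ξ → |G x ξ| ≤ C₀ * Real.log (1 +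
      Metric.infDist x Ωᶜ * Metric.infDist ξ Ωᶜ / dist x ξ ^ 2))
    (hu : AEMeasurable u ν)
    (hu_ne_zero : ∫⁻ x, ‖u x‖ₑ ^ 2 ∂ν ≠ 0) (hu_ne_top : ∫⁻ x, ‖u x‖ₑ ^ 2 ∂ν ≠ ⊤)
    (heig : ∀ᵐ x ∂ν, u x = lam * ∫ ξ, G x ξ * u ξ ∂ν) :
    1 ≤ ‖lam‖ₑ ^ 2 * (ENNReal.ofReal (2 * C₀ ^ 2) *
      (∫⁻ x, ENNReal.ofReal (Real.log (1 + Metric.infDist x Ωᶜ * Metric.diam Ω * R) ^ 2) ∂ν +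
        ENNReal.ofReal (logEnergy μ))) := by
  refine (one_le_enorm_sq_mul_lintegral_enorm_sq_of_eigenfunction
    (hνΩ.mono hG_meas) hu hu_ne_zero hu_ne_top heig).trans ?_
  gcongr
  calc ∫⁻ x, ∫⁻ ξ, ‖G x ξ‖ₑ ^ 2 ∂ν ∂ν
      ≤ ∫⁻ x, ENNReal.ofReal (2 * C₀ ^ 2) * (ENNReal.ofReal (Real.log (1 +
          Metric.infDist x Ωᶜ * Metric.diam Ω * R) ^ 2) + ENNReal.ofReal (logEnergy μ)) ∂ν := by
        refine lintegral_mono_ae (hνΩ.mono fun x hx => ?_)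
        refine (lintegral_enorm_sq_le_of_abs_le_log hE hΩ hR hν hνΩ hC₀ (hG x hx)).trans_eq ?_
        rw [← ENNReal.ofReal_add (by positivity) (logEnergy_nonneg μ),
          ← ENNReal.ofReal_mul (by positivity)]
        ring_nf
    _ = _ := by
        rw [lintegral_const_mul' _ _ ENNReal.ofReal_ne_top, lintegral_add_right _ measurable_const,
          lintegral_const, measure_univ, mul_one]

end LogKernel

section DensityMeasure

variable {α : Type*} [MeasurableSpace α] {μ : Measure α} {Ω : Set α} {ρ : α → ℝ}

/-- The weighted measure `ρ dμ` on `Ω`, with negative values of `ρ` truncated to `0`; with respect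
to it the eigenvalue equation is an eigenvalue equation for the integral operator with kernel `G`
itself. -/
noncomputable def densityMeasure (μ : Measure α) (Ω : Set α) (ρ : α → ℝ) : Measure α :=
  (μ.restrict Ω).withDensity fun x => ENNReal.ofReal (ρ x)

lemma densityMeasure_absolutelyContinuous : densityMeasure μ Ω ρ ≪ μ.restrict Ω :=
  withDensity_absolutelyContinuous _ _

lemma ae_mem_densityMeasure (hΩ : MeasurableSet Ω) : ∀ᵐ x ∂densityMeasure μ Ω ρ, x ∈ Ω :=
  densityMeasure_absolutelyContinuous.ae_le (ae_restrict_mem hΩ)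

lemma densityMeasure_le_smul (hΩ : MeasurableSet Ω) {R : ℝ} (hρR : ∀ x ∈ Ω, ρ x ≤ R) :
    densityMeasure μ Ω ρ ≤ ENNReal.ofReal R • μ := by
  calc densityMeasure μ Ω ρ ≤ (μ.restrict Ω).withDensity fun _ => ENNReal.ofReal R :=
        withDensity_mono ((ae_restrict_mem hΩ).mono fun x hx =>
          ENNReal.ofReal_le_ofReal (hρR x hx))
    _ ≤ ENNReal.ofReal R • μ := by
        rw [withDensity_const]
        gcongr
        exact Measure.restrict_le_self

lemma isProbabilityMeasure_densityMeasure (hΩ : MeasurableSet Ω) (hρ : ∀ x ∈ Ω, 0 ≤ ρ x)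
    (hρ_one : ∫ x in Ω, ρ x ∂μ = 1) : IsProbabilityMeasure (densityMeasure μ Ω ρ) where
  measure_univ := by
    have integrable : IntegrableOn ρ Ω μ := .of_integral_ne_zero (hρ_one ▸ one_ne_zero)
    rw [densityMeasure, withDensity_apply _ .univ, Measure.restrict_univ,
      ← ofReal_integral_eq_lintegral_ofReal integrable ((ae_restrict_mem hΩ).mono hρ), hρ_one,
      ENNReal.ofReal_one]

lemma lintegral_densityMeasure (hρ_int : IntegrableOn ρ Ω μ) (f : α → ℝ≥0∞) :
    ∫⁻ x, f x ∂densityMeasure μ Ω ρ = ∫⁻ x in Ω, ENNReal.ofReal (ρ x) * f x ∂μ :=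
  lintegral_withDensity_eq_lintegral_mul_non_measurable₀ _
    hρ_int.aemeasurable.ennreal_ofReal (.of_forall fun _ => ENNReal.ofReal_lt_top) f

lemma integral_densityMeasure (hΩ : MeasurableSet Ω) (hρ : ∀ x ∈ Ω, 0 ≤ ρ x)
    (hρ_int : IntegrableOn ρ Ω μ) (f : α → ℝ) :
    ∫ x, f x ∂densityMeasure μ Ω ρ = ∫ x in Ω, ρ x * f x ∂μ := by
  rw [densityMeasure, integral_withDensity_eq_integral_toReal_smul₀
    hρ_int.aemeasurable.ennreal_ofReal (.of_forall fun _ => ENNReal.ofReal_lt_top)]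
  refine setIntegral_congr_fun hΩ fun x hx => ?_
  simp only [ENNReal.toReal_ofReal (hρ x hx), smul_eq_mul]

lemma lintegral_enorm_sq_densityMeasure (hΩ : MeasurableSet Ω) (hρ : ∀ x ∈ Ω, 0 ≤ ρ x)
    (hρ_int : IntegrableOn ρ Ω μ) (u : α → ℝ) :
    ∫⁻ x, ‖u x‖ₑ ^ 2 ∂densityMeasure μ Ω ρ = ∫⁻ x in Ω, ENNReal.ofReal (ρ x * u x ^ 2) ∂μ := by
  rw [lintegral_densityMeasure hρ_int]
  refine setLIntegral_congr_fun hΩ fun x hx => ?_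
  rw [ENNReal.ofReal_mul (hρ x hx), ← enorm_pow, Real.enorm_of_nonneg (sq_nonneg _)]

end DensityMeasure

/-- `ρ` is a piecewise-constant density of total mass `1` on `Ω`, with positive value `ρv i` on the
measurable cell `K i`. The cells cover `Ω` and may overlap, in which case their values agree. -/
structure IsUnitStepDensity {α ι : Type*} [MeasurableSpace α] (μ : Measure α) (Ω : Set α)
    (K : ι → Set α) (ρv : ι → ℝ) (ρ : α → ℝ) : Prop where
  measurableSet_cell : ∀ i, MeasurableSet (K i)
  iUnion_cell : ⋃ i, K i = Ω
  value_pos : ∀ i, 0 < ρv i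
  eq_value : ∀ i, ∀ x ∈ K i, ρ x = ρv i
  integral_eq_one : ∫ x in Ω, ρ x ∂μ = 1

namespace IsUnitStepDensity

variable {α ι : Type*} [MeasurableSpace α] {μ : Measure α} {Ω : Set α} {K : ι → Set α}
  {ρv : ι → ℝ} {ρ : α → ℝ}

lemma measurableSet [Countable ι] (h : IsUnitStepDensity μ Ω K ρv ρ) : MeasurableSet Ω :=
  h.iUnion_cell ▸ .iUnion h.measurableSet_cell

lemma cell_subset (h : IsUnitStepDensity μ Ω K ρv ρ) (i : ι) : K i ⊆ Ω :=
  h.iUnion_cell ▸ Set.subset_iUnion K i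

lemma exists_mem_cell (h : IsUnitStepDensity μ Ω K ρv ρ) {x : α} (hx : x ∈ Ω) : ∃ i, x ∈ K i :=
  Set.mem_iUnion.mp (h.iUnion_cell ▸ hx)

lemma nonneg (h : IsUnitStepDensity μ Ω K ρv ρ) : ∀ x ∈ Ω, 0 ≤ ρ x := by
  intro x hx
  obtain ⟨i, hi⟩ := h.exists_mem_cell hx
  exact h.eq_value i x hi ▸ (h.value_pos i).le

lemma integrableOn (h : IsUnitStepDensity μ Ω K ρv ρ) : IntegrableOn ρ Ω μ :=
  .of_integral_ne_zero (h.integral_eq_one ▸ one_ne_zero)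

lemma nonempty_index (h : IsUnitStepDensity μ Ω K ρv ρ) : Nonempty ι := by
  by_contra hι
  rw [not_nonempty_iff] at hι
  simpa [← h.iUnion_cell] using h.integral_eq_one

lemma le_iSup [Finite ι] (h : IsUnitStepDensity μ Ω K ρv ρ) : ∀ x ∈ Ω, ρ x ≤ ⨆ i, ρv i := by
  intro x hx
  obtain ⟨i, hi⟩ := h.exists_mem_cell hx
  exact h.eq_value i x hi ▸ le_ciSup (Set.finite_range ρv).bddAbove i

lemma iSup_pos [Finite ι] (h : IsUnitStepDensity μ Ω K ρv ρ) : 0 < ⨆ i, ρv i := by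
  obtain ⟨i⟩ := h.nonempty_index
  exact (h.value_pos i).trans_le (le_ciSup (Set.finite_range ρv).bddAbove i)

lemma lintegral_densityMeasure_le_sum [Fintype ι] (h : IsUnitStepDensity μ Ω K ρv ρ)
    {f : α → ℝ≥0∞} {c : ι → ℝ≥0∞} (hf : ∀ i, ∀ x ∈ K i, f x ≤ c i) :
    ∫⁻ x, f x ∂densityMeasure μ Ω ρ ≤ ∑ i, ENNReal.ofReal (ρv i) * μ (K i) * c i := by
  calc ∫⁻ x, f x ∂densityMeasure μ Ω ρ
      = ∫⁻ x in ⋃ i, K i, ENNReal.ofReal (ρ x) * f x ∂μ := by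
        rw [lintegral_densityMeasure h.integrableOn, h.iUnion_cell]
    _ ≤ ∑ i, ∫⁻ x in K i, ENNReal.ofReal (ρ x) * f x ∂μ :=
        (lintegral_iUnion_le K _).trans_eq (tsum_fintype _)
    _ ≤ ∑ i, ∫⁻ _ in K i, ENNReal.ofReal (ρv i) * c i ∂μ := by
        refine Finset.sum_le_sum fun i _ => setLIntegral_mono' (h.measurableSet_cell i) ?_
        intro x hx
        rw [h.eq_value i x hx]
        gcongr
        exact hf i x hx
    _ = ∑ i, ENNReal.ofReal (ρv i) * μ (K i) * c i := by
        simp only [setLIntegral_const, mul_right_comm]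

end IsUnitStepDensity

section StepLogSum

variable {E ι : Type*} [Fintype ι] [MeasurableSpace E] {Ω : Set E} {K : ι → Set E} {ρv : ι → ℝ}
  {ρ : E → ℝ}

/-- The sum `Σᵢ ρᵢ |Kᵢ| ln² (1 + d_{Kᵢ} h_Ω ρ_max)` of the eigenvalue bound, which dominates
`∫_Ω ρ(x) ln² (1 + d(x) h_Ω ρ_max) dx`. -/
noncomputable def stepLogSum [PseudoMetricSpace E] (μ : Measure E) (Ω : Set E) (K : ι → Set E)
    (ρv : ι → ℝ) : ℝ :=
  ∑ i, ρv i * (μ (K i)).toReal * Real.log (1 +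
    (⨆ x : K i, Metric.infDist (x : E) Ωᶜ) * Metric.diam Ω * ⨆ i, ρv i) ^ 2

lemma stepLogSum_nonneg [PseudoMetricSpace E] {μ : Measure E} (hρv : ∀ i, 0 ≤ ρv i) :
    0 ≤ stepLogSum μ Ω K ρv :=
  Finset.sum_nonneg fun i _ => by
    have := hρv i
    positivity

lemma lintegral_sq_log_densityMeasure_le_stepLogSum [NormedAddCommGroup E] [NormedSpace ℝ E]
    [Nontrivial E] [ProperSpace E] {μ : Measure E} [IsFiniteMeasureOnCompacts μ]
    (hΩ : Bornology.IsBounded Ω) (h : IsUnitStepDensity μ Ω K ρv ρ) :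
    ∫⁻ x, ENNReal.ofReal (Real.log (1 +
        Metric.infDist x Ωᶜ * Metric.diam Ω * ⨆ i, ρv i) ^ 2) ∂densityMeasure μ Ω ρ ≤
      ENNReal.ofReal (stepLogSum μ Ω K ρv) := by
  have ρv_nonneg (i : ι) : 0 ≤ ρv i := (h.value_pos i).le
  have iSup_nonneg : 0 ≤ ⨆ i, ρv i := h.iSup_pos.le
  rw [stepLogSum, ENNReal.ofReal_sum_of_nonneg fun i _ => by have := ρv_nonneg i; positivity]
  have cell_volume_ne_top (i : ι) : μ (K i) ≠ ⊤ := (hΩ.subset (h.cell_subset i)).measure_lt_top.ne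
  refine (h.lintegral_densityMeasure_le_sum (c := fun i => ENNReal.ofReal (Real.log (1 +
    (⨆ x : K i, Metric.infDist (x : E) Ωᶜ) * Metric.diam Ω * ⨆ i, ρv i) ^ 2)) ?_).trans_eq ?_
  · intro i x hx
    have infDist_nonneg : 0 ≤ Metric.infDist x Ωᶜ := Metric.infDist_nonneg
    have log_nonneg :
        0 ≤ Real.log (1 + Metric.infDist x Ωᶜ * Metric.diam Ω * ⨆ i, ρv i) :=
      Real.log_nonneg (le_add_of_nonneg_right (by positivity))
    gcongr
    exact infDist_compl_le_iSup hΩ hx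
  · refine Finset.sum_congr rfl fun i _ => ?_
    rw [ENNReal.ofReal_mul (mul_nonneg (ρv_nonneg i) ENNReal.toReal_nonneg),
      ENNReal.ofReal_mul (ρv_nonneg i), ENNReal.ofReal_toReal (cell_volume_ne_top i)]

end StepLogSum

lemma inv_mul_inv_sqrt_le_of_one_le_sq_mul {l c J S : ℝ} (hc : 0 < c) (hJ : 0 ≤ J) (hS : 0 ≤ S)
    (h : 1 ≤ l ^ 2 * (2 * c ^ 2 * (S + J))) :
    (c * √(2 * (1 + J)))⁻¹ * (√(1 + S))⁻¹ ≤ |l| := by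
  have one_le_sq : 1 ≤ (|l| * (c * √(2 * (1 + J)) * √(1 + S))) ^ 2 := by
    calc 1 ≤ l ^ 2 * (2 * c ^ 2 * (S + J)) := h
      _ ≤ l ^ 2 * (2 * c ^ 2 * ((1 + J) * (1 + S))) := by
        gcongr
        linarith [mul_nonneg hJ hS]
      _ = _ := by
        simp only [mul_pow, sq_abs]
        rw [Real.sq_sqrt (by positivity), Real.sq_sqrt (by positivity)]
        ring
  rw [← mul_inv]
  exact (inv_le_iff_one_le_mul₀ (by positivity)).mpr ((one_le_sq_iff₀ (by positivity)).mp one_le_sq)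

theorem eigenvalue_lower_bound_two_dim_general {E ι : Type*} [NormedAddCommGroup E]
    [NormedSpace ℝ E] [MeasurableSpace E] [BorelSpace E] [Fintype ι] (hE : finrank ℝ E = 2)
    {μ : Measure E} [μ.IsAddHaarMeasure] {C₀ : ℝ} (hC₀ : 0 < C₀) {Ω : Set E} {K : ι → Set E}
    {ρv : ι → ℝ} {ρ : E → ℝ} {G : E → E → ℝ} {u : E → ℝ} {lam : ℝ}
    (hΩ : Bornology.IsBounded Ω) (hρ : IsUnitStepDensity μ Ω K ρv ρ)
    (hG_meas : ∀ x ∈ Ω, AEMeasurable (G x) (μ.restrict Ω))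
    (hG : ∀ x ∈ Ω, ∀ ξ ∈ Ω, x ≠ ξ → |G x ξ| ≤ C₀ * Real.log (1 +
      Metric.infDist x Ωᶜ * Metric.infDist ξ Ωᶜ / dist x ξ ^ 2))
    (hu : AEMeasurable u (μ.restrict Ω))
    (hu_pos : 0 < ∫⁻ x in Ω, ENNReal.ofReal (ρ x * u x ^ 2) ∂μ)
    (hu_lt_top : ∫⁻ x in Ω, ENNReal.ofReal (ρ x * u x ^ 2) ∂μ < ⊤)
    (heig : ∀ᵐ x ∂μ.restrict Ω, u x = lam * ∫ ξ in Ω, G x ξ * ρ ξ * u ξ ∂μ) :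
    (C₀ * √(2 * (1 + logEnergy μ)))⁻¹ * (√(1 + stepLogSum μ Ω K ρv))⁻¹ ≤ |lam| := by
  have : FiniteDimensional ℝ E := .of_finrank_pos (by lia)
  have : Nontrivial E := Module.nontrivial_of_finrank_pos (R := ℝ) (by lia)
  have := FiniteDimensional.proper_real E
  have := isProbabilityMeasure_densityMeasure hρ.measurableSet hρ.nonneg hρ.integral_eq_one
  have hac : densityMeasure μ Ω ρ ≪ μ.restrict Ω := densityMeasure_absolutelyContinuous
  have heig' : ∀ᵐ x ∂densityMeasure μ Ω ρ,
      u x = lam * ∫ ξ, G x ξ * u ξ ∂densityMeasure μ Ω ρ := by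
    filter_upwards [hac.ae_le heig] with x hx
    rw [hx, integral_densityMeasure hρ.measurableSet hρ.nonneg hρ.integrableOn]
    simp only [mul_left_comm, mul_assoc]
  have hS : 0 ≤ stepLogSum μ Ω K ρv := stepLogSum_nonneg fun i => (hρ.value_pos i).le
  have hJ : 0 ≤ logEnergy μ := logEnergy_nonneg μ
  rw [← lintegral_enorm_sq_densityMeasure hρ.measurableSet hρ.nonneg hρ.integrableOn]
    at hu_pos hu_lt_top
  have one_le := one_le_enorm_sq_mul_lintegral_of_log_kernel hE hΩ hρ.iSup_pos
    (densityMeasure_le_smul hρ.measurableSet hρ.le_iSup)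
    (ae_mem_densityMeasure hρ.measurableSet) hC₀.le
    (fun x hx => (hG_meas x hx).mono_ac hac) hG (hu.mono_ac hac) hu_pos.ne' hu_lt_top.ne heig'
  grw [lintegral_sq_log_densityMeasure_le_stepLogSum hΩ hρ] at one_le
  rw [← enorm_pow, Real.enorm_of_nonneg (sq_nonneg lam), ← ENNReal.ofReal_add hS hJ,
    ← ENNReal.ofReal_mul (by positivity), ← ENNReal.ofReal_mul (sq_nonneg lam),
    ENNReal.one_le_ofReal] at one_le
  exact inv_mul_inv_sqrt_le_of_one_le_sq_mul hC₀ hJ hS one_le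

/-- Two-dimensional lower bound for the smallest eigenvalue of the
density-weighted eigenvalue problem `-Δu = λ ρ u` with homogeneous Dirichlet
boundary conditions, via the logarithmic Green's-function bound.  The constant
`C` depends only on `C₀`. -/
theorem eigenvalue_lower_bound_two_dim
    (C₀ : ℝ) (hC₀ : 0 < C₀) :
    ∃ C : ℝ, 0 < C ∧
      ∀ (Ω : Set (EuclideanSpace ℝ (Fin 2))) (N : ℕ)
        (K : Fin N → Set (EuclideanSpace ℝ (Fin 2))) (ρv : Fin N → ℝ)
        (ρ : EuclideanSpace ℝ (Fin 2) → ℝ)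
        (G : EuclideanSpace ℝ (Fin 2) → EuclideanSpace ℝ (Fin 2) → ℝ)
        (u : EuclideanSpace ℝ (Fin 2) → ℝ) (lam : ℝ),
        IsOpen Ω → Bornology.IsBounded Ω →
        (∀ i, MeasurableSet (K i)) → Pairwise (Function.onFun Disjoint K) →
        (⋃ i, K i) = Ω →
        (∀ i, 0 < ρv i) → (∀ i, ∀ x ∈ K i, ρ x = ρv i) →
        (∫ x in Ω, ρ x) = 1 →
        Measurable (Function.uncurry G) →
        (∀ x ∈ Ω, ∀ ξ ∈ Ω, x ≠ ξ → 0 ≤ G x ξ ∧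
          G x ξ ≤ C₀ * Real.log (1 +
            Metric.infDist x Ωᶜ * Metric.infDist ξ Ωᶜ / dist x ξ ^ 2)) →
        0 < lam → Measurable u →
        (∀ᵐ x ∂(volume.restrict Ω), 0 < u x) →
        0 < (∫⁻ x in Ω, ENNReal.ofReal (ρ x * u x ^ 2)) →
        (∫⁻ x in Ω, ENNReal.ofReal (ρ x * u x ^ 2)) < ⊤ →
        (∀ᵐ x ∂(volume.restrict Ω),
          u x = lam * ∫ ξ in Ω, G x ξ * ρ ξ * u ξ) →
        C * (Real.sqrt (1 + ∑ i, ρv i * (volume (K i)).toReal *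
            (Real.log (1 +
              (⨆ x : K i, Metric.infDist (x : EuclideanSpace ℝ (Fin 2)) Ωᶜ) *
                Metric.diam Ω * (⨆ i, ρv i))) ^ 2))⁻¹ ≤ lam := by
  have energy_nonneg := logEnergy_nonneg (volume : Measure (EuclideanSpace ℝ (Fin 2)))
  refine ⟨(C₀ * √(2 * (1 + logEnergy (volume : Measure (EuclideanSpace ℝ (Fin 2))))))⁻¹,
    by positivity, ?_⟩
  intro Ω N K ρv ρ G u lam _ hΩ hK _ hKΩ hρv hρ hρ_int hG_meas hG hlam hu _ hu_pos hu_lt_top heig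
  have bound := eigenvalue_lower_bound_two_dim_general finrank_euclideanSpace_fin hC₀ hΩ
    ⟨hK, hKΩ, hρv, hρ, hρ_int⟩ (fun _ _ => hG_meas.of_uncurry_left.aemeasurable)
    (fun x hx ξ hξ hne => (abs_of_nonneg (hG x hx ξ hξ hne).1).trans_le (hG x hx ξ hξ hne).2)
    hu.aemeasurable hu_pos hu_lt_top heig
  rwa [abs_of_pos hlam] at bound
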